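/- Let (X,d) be a complete metric space that is doubling with some constant D ∈ ℕ, let α, β ∈ (0,1), let S ⊆ X, and let a subgame of the (α,β)-Schmidt game with target set S be given by data (ι, c, r, (T^i)) as in the context. Suppose there exist ĩ ∈ ι, ñ ∈ ℕ, and an integer m ≥ 1 such that for every n ≥ ñ and every position p ∈ T^ĩ of length 2n+1 there are m distinct points a₀,…,a_{m−1} ∈ X with p ⌢ ⟨a_j⟩ ∈ T^ĩ for each j and with the interiors of the closed balls B̄(a_j, (α·β)^(n+1)·r(ĩ)) pairwise disjoint. If dim_H(S) < log(m) / log(1/(α·β)), then Player II has a winning strategy in the subgame. -/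

import Mathlib

open Metric Set
open scoped ENNReal

/-- A tree of finite sequences: nonempty, prefix-closed, every position has a one-step
extension. -/
def IsTree {A : Type*} (T : Set (List A)) : Prop :=
  T.Nonempty ∧ (∀ p ∈ T, ∀ q : List A, q <+: p → q ∈ T) ∧ ∀ p ∈ T, ∃ a : A, p ++ [a] ∈ T

/-- The radius `ρ_k = α^(⌈(k+1)/2⌉) · β^(⌊(k+1)/2⌋) · ρinit` of the `k`-th ball of a play of
the `(α,β)`-Schmidt game with initial radius `ρinit`. -/
noncomputable def rho (α β ρinit : ℝ) (k : ℕ) : ℝ := α ^ (k / 2 + 1) * β ^ ((k + 1) / 2) * ρinit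

variable {X : Type*} [MetricSpace X]

/-- `T` is a tree of centers for the `(α,β)`-Schmidt game with initial ball
`B̄(c,ρ)`: the balls encoded along every position are nested. -/
def IsSchmidtTree (α β : ℝ) (c : X) (ρ : ℝ) (T : Set (List X)) : Prop :=
  IsTree T ∧ ∀ p ∈ T, ∀ k : ℕ, k < p.length →
    closedBall (p.getD k c) (rho α β ρ k) ⊆
      if k = 0 then closedBall c ρ else closedBall (p.getD (k - 1) c) (rho α β ρ (k - 1))

/-- The position `p` is won by the player moving at even lengths in the game on `T` in which this
player wants to reach a position satisfying `Bad`. -/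
inductive OpenPlayerWins {A : Type*} (T : Set (List A)) (Bad : List A → Prop) : List A → Prop
  | bad (p : List A) : Bad p → OpenPlayerWins T Bad p
  | even_move (p : List A) (a : A) : Even p.length → p ++ [a] ∈ T →
      OpenPlayerWins T Bad (p ++ [a]) → OpenPlayerWins T Bad p
  | odd_move (p : List A) : Odd p.length →
      (∀ a, p ++ [a] ∈ T → OpenPlayerWins T Bad (p ++ [a])) → OpenPlayerWins T Bad p

theorem ofFn_succ_eq_append {A : Type*} (y : ℕ → A) (n : ℕ) :
    (List.ofFn fun j : Fin (n + 1) => y j) = (List.ofFn fun j : Fin n => y j) ++ [y n] := by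
  rw [List.ofFn_succ_last]; simp

/-- If the initial position is not won by the player who wants to reach `Bad`, the opponent has a
strategy avoiding `Bad` forever. -/
theorem exists_avoiding_strategy {A : Type*} [Nonempty A] {T : Set (List A)} (hT : IsTree T)
    {Bad : List A → Prop} (h : ¬ OpenPlayerWins T Bad []) :
    ∃ σ : List A → A, (∀ p ∈ T, Odd p.length → p ++ [σ p] ∈ T) ∧
      ∀ y : ℕ → A, (∀ n : ℕ, (List.ofFn fun j : Fin n => y j) ∈ T) →
        (∀ n : ℕ, Odd n → y n = σ (List.ofFn fun j : Fin n => y j)) →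
        ∀ n : ℕ, ¬ Bad (List.ofFn fun j : Fin n => y j) := by
  have key : ∀ p : List A, ∃ a : A, p ∈ T → Odd p.length → p ++ [a] ∈ T ∧
      (¬ OpenPlayerWins T Bad p → ¬ OpenPlayerWins T Bad (p ++ [a])) := by
    intro p
    by_cases hp : p ∈ T ∧ Odd p.length
    · by_cases hw : OpenPlayerWins T Bad p
      · obtain ⟨a, ha⟩ := hT.2.2 p hp.1
        exact ⟨a, fun _ _ => ⟨ha, fun h => absurd hw h⟩⟩
      · by_contra! hcon
        refine hw (.odd_move p hp.2 fun a ha => ?_)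
        obtain ⟨_, _, h3⟩ := hcon a
        exact (h3 ha).2
    · exact ⟨Classical.arbitrary A, fun h1 h2 => absurd ⟨h1, h2⟩ hp⟩
  choose σ hσ using key
  refine ⟨σ, fun p hp ho => (hσ p hp ho).1, fun y hy hcons n hbad => ?_⟩
  suffices H : ∀ n : ℕ, ¬ OpenPlayerWins T Bad (List.ofFn fun j : Fin n => y j) from
    H n (.bad _ hbad)
  intro n
  induction n with
  | zero => simpa using h
  | succ n ih =>
    have hmem := hy (n + 1)
    rw [ofFn_succ_eq_append] at hmem ⊢
    rcases Nat.even_or_odd n with he | ho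
    · exact fun hw => ih (.even_move _ _ (by simpa using he) hmem hw)
    · rw [hcons n ho]
      exact (hσ _ (hy n) (by simpa using ho)).2 ih

/-- The covers by balls supplied by the doubling condition, iterated. -/
theorem exists_cover_closedBall_of_doubling {D : ℕ}
    (hD : ∀ (x : X) (r : ℝ), 0 < r → ∃ t : Finset X, t.card ≤ D ∧
      closedBall x r ⊆ ⋃ y ∈ t, closedBall y (r / 2)) (k : ℕ) (x : X) {r : ℝ} (hr : 0 < r) :
    ∃ t : Finset X, t.card ≤ D ^ k ∧ closedBall x r ⊆ ⋃ y ∈ t, closedBall y (r / 2 ^ k) := by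
  classical
  induction k with
  | zero => exact ⟨{x}, by simp, by simp⟩
  | succ k ih =>
    obtain ⟨t, ht, hc⟩ := ih
    choose u hu huc using fun y => hD y (r / 2 ^ k) (by positivity)
    refine ⟨t.biUnion u, ?_, fun z hz => ?_⟩
    · calc (t.biUnion u).card ≤ t.card * D := Finset.card_biUnion_le_card_mul _ _ _ fun y _ => hu y
        _ ≤ D ^ (k + 1) := by rw [pow_succ]; gcongr
    · obtain ⟨y, hy, hzy⟩ := mem_iUnion₂.1 (hc hz)
      obtain ⟨w, hw, hzw⟩ := mem_iUnion₂.1 (huc y hzy)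
      refine mem_iUnion₂.2 ⟨w, Finset.mem_biUnion.2 ⟨y, hy, hw⟩, ?_⟩
      rwa [pow_succ, ← div_div]

/-- A separated family of points, each at distance at most `R` from a set of diameter at most
`R`, has boundedly many members in a doubling space. -/
theorem card_le_of_doubling_of_separated {D : ℕ}
    (hD : ∀ (x : X) (r : ℝ), 0 < r → ∃ t : Finset X, t.card ≤ D ∧
      closedBall x r ⊆ ⋃ y ∈ t, closedBall y (r / 2)) {R : ℝ} (hR : 0 < R) {U : Set X}
    (hU : ediam U ≤ ENNReal.ofReal R) (F : Finset X)
    (hF : ∀ x ∈ F, (closedBall x R ∩ U).Nonempty)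
    (hsep : ∀ x ∈ F, ∀ y ∈ F, x ≠ y → R ≤ dist x y) : F.card ≤ D ^ 3 := by
  rcases F.eq_empty_or_nonempty with rfl | ⟨x₀, hx₀⟩
  · simp
  obtain ⟨u, -, hu⟩ := hF x₀ hx₀
  obtain ⟨t, ht, hc⟩ := exists_cover_closedBall_of_doubling hD 3 u (r := 2 * R) (by positivity)
  refine le_trans ?_ ht
  have hmem : ∀ x ∈ F, ∃ y ∈ t, dist x y ≤ 2 * R / 2 ^ 3 := by
    intro x hx
    obtain ⟨v, hv, hvU⟩ := hF x hx
    have huv : dist v u ≤ R := by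
      have := (edist_le_ediam_of_mem hvU hu).trans hU
      rwa [edist_dist, ENNReal.ofReal_le_ofReal_iff hR.le] at this
    have hxu : x ∈ closedBall u (2 * R) := by
      rw [mem_closedBall]
      rw [mem_closedBall, dist_comm] at hv
      linarith [dist_triangle x v u]
    obtain ⟨y, hy, hxy⟩ := mem_iUnion₂.1 (hc hxu)
    exact ⟨y, hy, hxy⟩
  choose! f hf hfd using hmem
  refine Finset.card_le_card_of_injOn f hf fun x hx y hy hxy => ?_
  by_contra hne
  have h1 := hfd x hx
  have h2 := hfd y hy
  have h3 := hsep x hx y hy hne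
  rw [← hxy] at h2
  linarith [dist_triangle_right x y (f x)]

theorem le_dist_of_disjoint_interior_closedBall {x y : X} {R : ℝ} (hR : 0 < R)
    (h : Disjoint (interior (closedBall x R)) (interior (closedBall y R))) : R ≤ dist x y := by
  by_contra! hlt
  refine Set.disjoint_left.1 h (?_ : x ∈ _) ?_
  · exact ball_subset_interior_closedBall (mem_ball_self hR)
  · exact ball_subset_interior_closedBall hlt

/-- A diameter `x` is comparable to a term of a geometric sequence of scales, up to an arbitrarily
small error in the `δ`-th power that only matters for `x = 0`. -/
theorem exists_geometric_scale {l δ R : ℝ} (hl : l ∈ Ioo (0 : ℝ) 1) (hδ : 0 < δ) (hR : 0 < R)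
    (n₀ : ℕ) {x η : ℝ≥0∞} (hx : x ≤ ENNReal.ofReal (l ^ n₀ * R)) (hη : 0 < η) :
    ∃ N, n₀ ≤ N ∧ x ≤ ENNReal.ofReal (l ^ N * R) ∧
      ENNReal.ofReal (l ^ δ) ^ N ≤ x ^ δ * (ENNReal.ofReal ((l * R) ^ δ))⁻¹ + η := by
  obtain ⟨hl0, hl1⟩ := hl
  rcases eq_or_ne x 0 with rfl | hx0
  · have hlt : ENNReal.ofReal (l ^ δ) < 1 := by
      rw [ENNReal.ofReal_lt_one]
      exact Real.rpow_lt_one hl0.le hl1 hδ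
    have ht := ENNReal.tendsto_pow_atTop_nhds_zero_of_lt_one hlt
    obtain ⟨N, hN, hn⟩ := ((ht.eventually_le_const hη).and (Filter.eventually_ge_atTop n₀)).exists
    exact ⟨N, hn, zero_le, hN.trans le_add_self⟩
  · have hxt : x ≠ ∞ := ne_top_of_le_ne_top ENNReal.ofReal_ne_top hx
    obtain ⟨d, hd, rfl⟩ : ∃ d : ℝ, 0 < d ∧ x = ENNReal.ofReal d :=
      ⟨x.toReal, ENNReal.toReal_pos hx0 hxt, (ENNReal.ofReal_toReal hxt).symm⟩
    have hs : 0 < l ^ n₀ * R := by positivity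
    rw [ENNReal.ofReal_le_ofReal_iff hs.le] at hx
    obtain ⟨k, hk1, hk2⟩ := exists_nat_pow_near_of_lt_one (div_pos hd hs)
      ((div_le_one hs).2 hx) hl0 hl1
    rw [lt_div_iff₀ hs] at hk1
    rw [div_le_iff₀ hs] at hk2
    refine ⟨n₀ + k, Nat.le_add_right _ _, ENNReal.ofReal_le_ofReal ?_, le_add_right ?_⟩
    · calc d ≤ l ^ k * (l ^ n₀ * R) := hk2
        _ = l ^ (n₀ + k) * R := by ring
    · have hpos : 0 < (l * R) ^ δ := by positivity
      rw [ENNReal.ofReal_rpow_of_pos hd, ← ENNReal.ofReal_inv_of_pos hpos,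
        ← ENNReal.ofReal_mul (by positivity), ← ENNReal.ofReal_pow (by positivity)]
      refine ENNReal.ofReal_le_ofReal ?_
      rw [← div_eq_mul_inv, le_div_iff₀ hpos, ← Real.rpow_natCast, ← Real.rpow_mul hl0.le,
        mul_comm δ, Real.rpow_mul hl0.le, Real.rpow_natCast,
        ← Real.mul_rpow (by positivity) (by positivity)]
      refine Real.rpow_le_rpow (by positivity) ?_ hδ.le
      calc l ^ (n₀ + k) * (l * R) = l ^ (k + 1) * (l ^ n₀ * R) := by ring
        _ ≤ d := hk1.le

/-- A set of Hausdorff dimension less than `δ` has covers by sets of diameters at most `l ^ N k * R`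
with `∑ (l ^ δ) ^ N k` arbitrarily small. -/
theorem exists_cover_of_dimH_lt {S : Set X} {l δ R : ℝ} (hS : dimH S < ENNReal.ofReal δ)
    (hl : l ∈ Ioo (0 : ℝ) 1) (hR : 0 < R) (n₀ : ℕ) {ε : ℝ≥0∞} (hε : 0 < ε) :
    ∃ (t : ℕ → Set X) (N : ℕ → ℕ), S ⊆ ⋃ k, t k ∧ (∀ k, n₀ ≤ N k) ∧
      (∀ k, ediam (t k) ≤ ENNReal.ofReal (l ^ N k * R)) ∧
      ∑' k, ENNReal.ofReal (l ^ δ) ^ N k < ε := by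
  borelize X
  have hδ : 0 < δ := ENNReal.ofReal_pos.1 (bot_le.trans_lt hS)
  have hl0 := hl.1
  set K := (ENNReal.ofReal ((l * R) ^ δ))⁻¹ with hK
  have hK0 : K ≠ 0 := ENNReal.inv_ne_zero.2 ENNReal.ofReal_ne_top
  have hKt : K ≠ ∞ := ENNReal.inv_ne_top.2 (ENNReal.ofReal_pos.2 (by positivity)).ne'
  have hμ := hausdorffMeasure_of_dimH_lt (d := δ.toNNReal) hS
  rw [Real.coe_toNNReal _ hδ.le, MeasureTheory.Measure.hausdorffMeasure_apply] at hμ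
  have hs : 0 < ENNReal.ofReal (l ^ n₀ * R) := ENNReal.ofReal_pos.2 (by positivity)
  have hinf := (le_iSup₂_of_le (f := fun (r : ℝ≥0∞) (_ : 0 < r) =>
      ⨅ (t : ℕ → Set X) (_ : S ⊆ ⋃ n, t n) (_ : ∀ n, ediam (t n) ≤ r),
        ∑' n, ⨆ _ : (t n).Nonempty, ediam (t n) ^ δ) _ hs le_rfl).trans_eq hμ
  have hε2 : 0 < ε / 2 / K := ENNReal.div_pos (ENNReal.half_pos hε.ne').ne' hKt
  have hlt := hinf.trans_lt hε2
  simp only [iInf_lt_iff] at hlt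
  obtain ⟨t, hSt, htd, hsum⟩ := hlt
  obtain ⟨η, hη, hηs⟩ := ENNReal.exists_pos_sum_of_countable' (ENNReal.half_pos hε.ne').ne' ℕ
  choose N hN hdN hwN using fun k => exists_geometric_scale hl hδ hR n₀ (htd k) (hη k)
  refine ⟨t, N, hSt, hN, hdN, ?_⟩
  have hsup : ∀ k, (⨆ _ : (t k).Nonempty, ediam (t k) ^ δ) = ediam (t k) ^ δ := by
    intro k
    rcases (t k).eq_empty_or_nonempty with h | h
    · simp [h, hδ]
    · simp [h]
  simp only [hsup] at hsum
  calc ∑' k, ENNReal.ofReal (l ^ δ) ^ N k ≤ ∑' k, (ediam (t k) ^ δ * K + η k) :=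
        ENNReal.tsum_le_tsum hwN
    _ = (∑' k, ediam (t k) ^ δ) * K + ∑' k, η k := by
        rw [ENNReal.tsum_add, ENNReal.tsum_mul_right]
    _ < ε / 2 + ε / 2 := ENNReal.add_lt_add
        ((ENNReal.lt_div_iff_mul_lt (Or.inl hK0) (Or.inl hKt)).1 hsum) hηs
    _ = ε := ENNReal.add_halves ε

/-- In a doubling space, a finite family of balls of radii `l ^ n * R` with disjoint interiors,
each meeting a member of its own scale of a cover, has total weight controlled by the cover. -/
theorem sum_pow_le_of_doubling {D : ℕ}
    (hD : ∀ (x : X) (r : ℝ), 0 < r → ∃ t : Finset X, t.card ≤ D ∧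
      closedBall x r ⊆ ⋃ y ∈ t, closedBall y (r / 2)) {l R : ℝ} (hl : 0 < l) (hR : 0 < R)
    {t : ℕ → Set X} {N : ℕ → ℕ} (ht : ∀ k, ediam (t k) ≤ ENNReal.ofReal (l ^ N k * R))
    (w : ℝ≥0∞) (F : Finset (X × ℕ))
    (hF : ∀ q ∈ F, ∃ k, q.2 = N k ∧ (closedBall q.1 (l ^ q.2 * R) ∩ t k).Nonempty)
    (hdisj : (F : Set (X × ℕ)).PairwiseDisjoint
      fun q => interior (closedBall q.1 (l ^ q.2 * R))) :
    ∑ q ∈ F, w ^ q.2 ≤ D ^ 3 * ∑' k, w ^ N k := by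
  classical
  let G : ℕ → Finset (X × ℕ) := fun k =>
    F.filter fun q => q.2 = N k ∧ (closedBall q.1 (l ^ q.2 * R) ∩ t k).Nonempty
  have hG : ∀ k, (G k).card ≤ D ^ 3 := by
    intro k
    have hinj : Set.InjOn Prod.fst (G k : Set (X × ℕ)) := by
      intro q hq q' hq' h
      simp only [G, Finset.coe_filter, mem_ofPred_eq] at hq hq'
      exact Prod.ext h (hq.2.1.trans hq'.2.1.symm)
    rw [← Finset.card_image_of_injOn hinj]
    refine card_le_of_doubling_of_separated hD (R := l ^ N k * R) (by positivity) (ht k) _ ?_ ?_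
    · intro x hx
      obtain ⟨q, hq, rfl⟩ := Finset.mem_image.1 hx
      obtain ⟨-, h1, h2⟩ := Finset.mem_filter.1 hq
      rwa [h1] at h2
    · intro x hx y hy hxy
      obtain ⟨q, hq, rfl⟩ := Finset.mem_image.1 hx
      obtain ⟨q', hq', rfl⟩ := Finset.mem_image.1 hy
      obtain ⟨hqF, h1, -⟩ := Finset.mem_filter.1 hq
      obtain ⟨hqF', h1', -⟩ := Finset.mem_filter.1 hq'
      have := hdisj hqF hqF' (fun h => hxy (congrArg Prod.fst h))
      simp only [Function.onFun, h1, h1'] at this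
      exact le_dist_of_disjoint_interior_closedBall (by positivity) this
  calc ∑ q ∈ F, w ^ q.2
      ≤ ∑ q ∈ F, ∑' k, if q ∈ G k then w ^ N k else 0 := by
        refine Finset.sum_le_sum fun q hq => ?_
        obtain ⟨k, hk, hne⟩ := hF q hq
        refine le_trans ?_ (ENNReal.le_tsum k)
        rw [if_pos (Finset.mem_filter.2 ⟨hq, hk, hne⟩), hk]
    _ = ∑' k, ∑ q ∈ F, if q ∈ G k then w ^ N k else 0 :=
        (Summable.tsum_finsetSum fun _ _ => ENNReal.summable).symm
    _ ≤ ∑' k, D ^ 3 * w ^ N k := by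
        refine ENNReal.tsum_le_tsum fun k => ?_
        rw [← Finset.sum_filter, Finset.sum_const, nsmul_eq_mul]
        gcongr
        have : (F.filter fun q => q ∈ G k) = G k := by
          ext q; simp [G]
        rw [this]
        exact_mod_cast hG k
    _ = D ^ 3 * ∑' k, w ^ N k := ENNReal.tsum_mul_left

/-- The ball encoded by a position `p` of the `(α,β)`-Schmidt game with initial ball
`B̄(c,ρ)`. -/
def positionBall (α β : ℝ) (c : X) (ρ : ℝ) (p : List X) : Set X :=
  closedBall (p.getD (p.length - 1) c) (α ^ ((p.length + 1) / 2) * β ^ (p.length / 2) * ρ)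

theorem positionBall_append (α β : ℝ) (c : X) (ρ : ℝ) (p : List X) (a : X) :
    positionBall α β c ρ (p ++ [a]) = closedBall a (rho α β ρ p.length) := by
  have h : (p.length + 1 + 1) / 2 = p.length / 2 + 1 := by omega
  simp [positionBall, rho, h]

theorem positionBall_of_length_eq {α β : ℝ} {c : X} {ρ : ℝ} {p : List X} {n : ℕ}
    (hp : p.length = 2 * n) :
    positionBall α β c ρ p = closedBall (p.getD (p.length - 1) c) ((α * β) ^ n * ρ) := by
  have h1 : (p.length + 1) / 2 = n := by omega
  have h2 : p.length / 2 = n := by omega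
  rw [positionBall, h1, h2, mul_pow]

theorem IsSchmidtTree.positionBall_append_subset {α β : ℝ} {c : X} {ρ : ℝ} {T : Set (List X)}
    (hT : IsSchmidtTree α β c ρ T) {p : List X} {a : X} (h : p ++ [a] ∈ T) :
    positionBall α β c ρ (p ++ [a]) ⊆ positionBall α β c ρ p := by
  have := hT.2 _ h p.length (by simp)
  rw [positionBall_append]
  rcases p.eq_nil_or_concat with rfl | ⟨q, b, rfl⟩
  · simpa [positionBall] using this
  · rw [List.concat_eq_append] at this ⊢
    rw [positionBall_append]
    simpa using this

/-- If the player choosing the even entries can force a ball of the scale of some `t k` to meet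
`t k`, then the forced balls contain a finite disjoint family of large weight. -/
theorem OpenPlayerWins.exists_disjoint_family {α β : ℝ} (hα : 0 < α) (hβ : 0 < β) {c : X} {ρ : ℝ}
    (hρ : 0 < ρ) {T : Set (List X)} (hT : IsSchmidtTree α β c ρ T) {m n₀ : ℕ} (hm : 1 ≤ m)
    (hsplit : ∀ n : ℕ, n₀ ≤ n → ∀ p ∈ T, p.length = 2 * n + 1 →
      ∃ a : Fin m → X, (∀ j, p ++ [a j] ∈ T) ∧
        Pairwise fun j j' : Fin m =>
          Disjoint (interior (closedBall (a j) ((α * β) ^ (n + 1) * ρ)))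
            (interior (closedBall (a j') ((α * β) ^ (n + 1) * ρ))))
    {t : ℕ → Set X} {N : ℕ → ℕ} (hN : ∀ k, n₀ ≤ N k) {p : List X}
    (h : OpenPlayerWins T
      (fun p => ∃ k, p.length = 2 * N k ∧ (positionBall α β c ρ p ∩ t k).Nonempty) p)
    (hp : p ∈ T) :
    ∃ F : Finset (X × ℕ),
      (∀ q ∈ F, ∃ k, q.2 = N k ∧ (closedBall q.1 ((α * β) ^ q.2 * ρ) ∩ t k).Nonempty) ∧
      (∀ q ∈ F, closedBall q.1 ((α * β) ^ q.2 * ρ) ⊆ positionBall α β c ρ p) ∧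
      (F : Set (X × ℕ)).PairwiseDisjoint
        (fun q => interior (closedBall q.1 ((α * β) ^ q.2 * ρ))) ∧
      ((m : ℝ≥0∞)⁻¹) ^ max (p.length / 2) n₀ ≤ ∑ q ∈ F, ((m : ℝ≥0∞)⁻¹) ^ q.2 := by
  classical
  induction h with
  | bad p hbad =>
    obtain ⟨k, hk, hne⟩ := hbad
    have hball := positionBall_of_length_eq (α := α) (β := β) (c := c) (ρ := ρ) hk
    refine ⟨{(p.getD (p.length - 1) c, N k)}, ?_, ?_, by simp, ?_⟩
    · intro q hq
      rw [Finset.mem_singleton] at hq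
      subst hq
      exact ⟨k, rfl, hball ▸ hne⟩
    · intro q hq
      rw [Finset.mem_singleton] at hq
      subst hq
      exact hball.ge
    · have : p.length / 2 = N k := by omega
      rw [Finset.sum_singleton, this, max_eq_left (hN k)]
  | even_move p a he ha _ ih =>
    obtain ⟨F, h1, h2, h3, h4⟩ := ih ha
    refine ⟨F, h1, fun q hq => (h2 q hq).trans (hT.positionBall_append_subset ha), h3, ?_⟩
    have : (p ++ [a]).length / 2 = p.length / 2 := by
      obtain ⟨n, hn⟩ := he
      rw [List.length_append, List.length_singleton]
      omega
    rwa [this] at h4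
  | odd_move p ho _ ih =>
    obtain ⟨n, hn⟩ := ho
    have hlen : ∀ a : X, (p ++ [a]).length / 2 = n + 1 := by
      intro a
      rw [List.length_append, List.length_singleton]
      omega
    have hn2 : p.length / 2 = n := by omega
    simp only [hlen] at ih
    rw [hn2]
    rcases lt_or_ge n n₀ with hlt | hge
    · obtain ⟨a, ha⟩ := hT.1.2.2 p hp
      obtain ⟨F, h1, h2, h3, h4⟩ := ih a ha ha
      refine ⟨F, h1, fun q hq => (h2 q hq).trans (hT.positionBall_append_subset ha), h3, ?_⟩
      rwa [max_eq_right (by omega)] at h4 ⊢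
    · obtain ⟨a, ha, hdis⟩ := hsplit n hge p hp hn
      choose F h1 h2 h3 h4 using fun j => ih (a j) (ha j) (ha j)
      have hball : ∀ j, positionBall α β c ρ (p ++ [a j]) =
          closedBall (a j) ((α * β) ^ (n + 1) * ρ) := by
        intro j
        rw [positionBall_of_length_eq (n := n + 1) (by simp [hn]; ring)]
        simp
      have hcross : ∀ j j', j ≠ j' → ∀ q ∈ F j, ∀ q' ∈ F j',
          Disjoint (interior (closedBall q.1 ((α * β) ^ q.2 * ρ)))
            (interior (closedBall q'.1 ((α * β) ^ q'.2 * ρ))) := by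
        intro j j' hj q hq q' hq'
        refine (hdis hj).mono (interior_mono ?_) (interior_mono ?_)
        · exact hball j ▸ h2 j q hq
        · exact hball j' ▸ h2 j' q' hq'
      have hFdisj : ((Finset.univ : Finset (Fin m)) : Set (Fin m)).PairwiseDisjoint F := by
        intro j _ j' _ hj
        refine Finset.disjoint_left.2 fun q hq hq' => ?_
        refine Set.disjoint_left.1 (hcross j j' hj q hq q hq') (?_ : q.1 ∈ _) ?_ <;>
          exact ball_subset_interior_closedBall (mem_ball_self (by positivity))
      refine ⟨Finset.univ.biUnion F, ?_, ?_, ?_, ?_⟩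
      · intro q hq
        obtain ⟨j, -, hj⟩ := Finset.mem_biUnion.1 hq
        exact h1 j q hj
      · intro q hq
        obtain ⟨j, -, hj⟩ := Finset.mem_biUnion.1 hq
        exact (h2 j q hj).trans (hT.positionBall_append_subset (ha j))
      · intro q hq q' hq' hne
        obtain ⟨j, -, hj⟩ := Finset.mem_biUnion.1 hq
        obtain ⟨j', -, hj'⟩ := Finset.mem_biUnion.1 hq'
        rcases eq_or_ne j j' with rfl | hjj
        · exact h3 j hj hj' hne
        · exact hcross j j' hjj q hj q' hj'
      · rw [Finset.sum_biUnion hFdisj, max_eq_left hge]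
        have hm0 : (m : ℝ≥0∞) ≠ 0 := by exact_mod_cast (by omega : m ≠ 0)
        calc ((m : ℝ≥0∞)⁻¹) ^ n = ∑ _j : Fin m, ((m : ℝ≥0∞)⁻¹) ^ (n + 1) := by
              rw [Finset.sum_const, Finset.card_univ, Fintype.card_fin, nsmul_eq_mul, pow_succ',
                ← mul_assoc, ENNReal.mul_inv_cancel hm0 (ENNReal.natCast_ne_top m), one_mul]
          _ ≤ _ := Finset.sum_le_sum fun j _ => by
              simpa [max_eq_left (show n₀ ≤ n + 1 by omega)] using h4 j

theorem rho_nonneg {α β ρ : ℝ} (hα : 0 ≤ α) (hβ : 0 ≤ β) (hρ : 0 ≤ ρ) (k : ℕ) :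
    0 ≤ rho α β ρ k := by
  unfold rho; positivity

theorem tendsto_rho {α β : ℝ} (hα : α ∈ Ioo (0 : ℝ) 1) (hβ : β ∈ Ioo (0 : ℝ) 1) {ρ : ℝ}
    (hρ : 0 < ρ) : Filter.Tendsto (rho α β ρ) Filter.atTop (nhds 0) := by
  have hpow : Filter.Tendsto (fun k : ℕ => α ^ (k / 2) * ρ) Filter.atTop (nhds 0) := by
    have h := (tendsto_pow_atTop_nhds_zero_of_lt_one hα.1.le hα.2).comp
      (Nat.tendsto_div_const_atTop two_ne_zero)
    simpa using h.mul_const ρ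
  refine squeeze_zero (rho_nonneg hα.1.le hβ.1.le hρ.le) (fun k => ?_) hpow
  have h1 : α ^ (k / 2 + 1) ≤ α ^ (k / 2) := pow_le_pow_of_le_one hα.1.le hα.2.le (Nat.le_succ _)
  have h2 : β ^ ((k + 1) / 2) ≤ 1 := pow_le_one₀ hβ.1.le hβ.2.le
  have h3 : 0 ≤ β ^ ((k + 1) / 2) := pow_nonneg hβ.1.le _
  have h4 : 0 ≤ α ^ (k / 2) := pow_nonneg hα.1.le _
  unfold rho
  gcongr
  calc α ^ (k / 2 + 1) * β ^ ((k + 1) / 2) ≤ α ^ (k / 2) * 1 := by gcongr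
    _ = α ^ (k / 2) := mul_one _

/-- The balls of an infinite play in a Schmidt tree over a complete space have a common point. -/
theorem IsSchmidtTree.nonempty_iInter [CompleteSpace X] {α β : ℝ} (hα : α ∈ Ioo (0 : ℝ) 1)
    (hβ : β ∈ Ioo (0 : ℝ) 1) {c : X} {ρ : ℝ} (hρ : 0 < ρ) {T : Set (List X)}
    (hT : IsSchmidtTree α β c ρ T) {y : ℕ → X}
    (hy : ∀ n : ℕ, (List.ofFn fun j : Fin n => y j) ∈ T) :
    (⋂ n : ℕ, closedBall (y n) (rho α β ρ n)).Nonempty := by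
  have hnn := rho_nonneg (α := α) (β := β) hα.1.le hβ.1.le hρ.le
  have hanti : Antitone fun n => closedBall (y n) (rho α β ρ n) := by
    refine antitone_nat_of_succ_le fun n => ?_
    have hmem := hy (n + 2)
    rw [ofFn_succ_eq_append] at hmem
    have := hT.positionBall_append_subset hmem
    rw [positionBall_append, ofFn_succ_eq_append, positionBall_append] at this
    simpa using this
  refine nonempty_iInter_of_nonempty_biInter (fun _ => isClosed_closedBall)
    (fun _ => isBounded_closedBall) (fun n => ⟨y n, mem_iInter₂.2 fun k hk =>
      hanti hk (mem_closedBall_self (hnn n))⟩) ?_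
  refine squeeze_zero (fun _ => diam_nonneg) (fun n => diam_closedBall (hnn n)) ?_
  simpa using (tendsto_rho hα hβ hρ).const_mul 2

/-- If in some tree of the subgame, from some stage on, every position of odd length `2n+1`
has `m` one-step extensions whose balls have pairwise disjoint interiors, and
`dim_H S < log m / log (1/(αβ))`, then Player II has a winning strategy in the
`(α,β)`-Schmidt subgame with target set `S`. -/
theorem playerII_wins_schmidt_subgame [CompleteSpace X] (D : ℕ)
    (hD : ∀ (x : X) (r : ℝ), 0 < r → ∃ t : Finset X, t.card ≤ D ∧
      closedBall x r ⊆ ⋃ y ∈ t, closedBall y (r / 2))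
    (α β : ℝ) (hα : α ∈ Set.Ioo (0 : ℝ) 1) (hβ : β ∈ Set.Ioo (0 : ℝ) 1) (S : Set X)
    (ι : Type*) [Nonempty ι] (c : ι → X) (r : ι → ℝ) (hr : ∀ i, 0 < r i)
    (T : ι → Set (List X)) (hT : ∀ i, IsSchmidtTree α β (c i) (r i) (T i))
    (m : ℕ) (hm : 1 ≤ m)
    (hyp : ∃ (i₀ : ι) (n₀ : ℕ), ∀ n : ℕ, n₀ ≤ n → ∀ p ∈ T i₀, p.length = 2 * n + 1 →
      ∃ a : Fin m → X, Function.Injective a ∧ (∀ j, p ++ [a j] ∈ T i₀) ∧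
        Pairwise fun j j' : Fin m =>
          Disjoint (interior (closedBall (a j) ((α * β) ^ (n + 1) * r i₀)))
            (interior (closedBall (a j') ((α * β) ^ (n + 1) * r i₀))))
    (hS : dimH S < ENNReal.ofReal (Real.log m / Real.log (1 / (α * β)))) :
    ∃ (i : ι) (σ : List X → X),
      (∀ p ∈ T i, Odd p.length → p ++ [σ p] ∈ T i) ∧
      ∀ y : ℕ → X, (∀ n : ℕ, (List.ofFn fun j : Fin n => y j) ∈ T i) →
        (∀ n : ℕ, Odd n → y n = σ (List.ofFn fun j : Fin n => y j)) →
        ¬ (⋂ n : ℕ, closedBall (y n) (rho α β (r i) n)) ⊆ S := by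
  obtain ⟨i, n₀, hsplit⟩ := hyp
  have hαβ : α * β ∈ Ioo (0 : ℝ) 1 :=
    ⟨mul_pos hα.1 hβ.1, mul_lt_one_of_nonneg_of_lt_one_left hα.1.le hα.2 hβ.2.le⟩
  set δ := Real.log m / Real.log (1 / (α * β)) with hδ
  have hm0 : (0 : ℝ) < m := by exact_mod_cast hm
  have hw : ENNReal.ofReal ((α * β) ^ δ) = (m : ℝ≥0∞)⁻¹ := by
    have hlog : Real.log (α * β) ≠ 0 := (Real.log_neg hαβ.1 hαβ.2).ne
    have : (α * β) ^ δ = (m : ℝ)⁻¹ := by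
      rw [Real.rpow_def_of_pos hαβ.1, hδ, one_div, Real.log_inv, div_neg, mul_neg,
        mul_div_cancel₀ _ hlog, Real.exp_neg, Real.exp_log hm0]
    rw [this, ENNReal.ofReal_inv_of_pos hm0, ENNReal.ofReal_natCast]
  have hwpos : 0 < ((m : ℝ≥0∞)⁻¹) ^ (n₀ + 1) :=
    ENNReal.pow_pos (ENNReal.inv_pos.2 (ENNReal.natCast_ne_top m)) _
  have hDt : (D : ℝ≥0∞) ^ 3 ≠ ∞ := ENNReal.pow_ne_top (ENNReal.natCast_ne_top D)
  obtain ⟨t, N, hSt, hN, htd, hsum⟩ := exists_cover_of_dimH_lt hS hαβ (hr i) (n₀ + 1)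
    (ENNReal.div_pos hwpos.ne' hDt)
  have hnil : [] ∈ T i := by
    obtain ⟨p, hp⟩ := (hT i).1.1
    exact (hT i).1.2.1 p hp [] p.nil_prefix
  have : Nonempty X := ⟨c i⟩
  obtain ⟨σ, hσ, hwin⟩ := exists_avoiding_strategy (hT i).1
    (Bad := fun p => ∃ k, p.length = 2 * N k ∧
      (positionBall α β (c i) (r i) p ∩ t k).Nonempty) (by
    intro hW
    obtain ⟨F, hF, -, hdisj, hsumF⟩ := hW.exists_disjoint_family hα.1 hβ.1 (hr i) (hT i) hm
      (fun n hn p hp hl => (hsplit n (by omega) p hp hl).imp fun _ h => h.2) hN hnil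
    have hle := hsumF.trans (sum_pow_le_of_doubling hD hαβ.1 (hr i) htd _ F hF hdisj)
    rw [hw] at hsum
    have hlt := ENNReal.mul_lt_of_lt_div' hsum
    simp only [List.length_nil, Nat.zero_div, Nat.zero_max] at hle
    exact absurd hle hlt.not_ge)
  refine ⟨i, σ, hσ, fun y hy hcons hsub => ?_⟩
  obtain ⟨x, hx⟩ := (hT i).nonempty_iInter hα hβ (hr i) hy
  obtain ⟨k, hk⟩ := mem_iUnion.1 (hSt (hsub hx))
  refine hwin y hy hcons (2 * N k) ⟨k, by simp, x, ?_, hk⟩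
  obtain ⟨n, hn⟩ : ∃ n, 2 * N k = n + 1 := ⟨2 * N k - 1, by have := hN k; omega⟩
  rw [hn, ofFn_succ_eq_append, positionBall_append]
  simpa using mem_iInter.1 hx n
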